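/- arXiv:math/9409203 — 4 statements merged into one kernel-verified Lean document; each statement's English description precedes it below -/
import Mathlib

section
/- Let P be an atomless ℵ₀-distributive partial order of cardinality ℵ₁. Then there exists a family ⟨A_α : α < ω₁⟩ of subsets of P such that: (i) each A_α is a maximal antichain of P; (ii) for all β < α < ω₁, every element of A_α lies strictly below exactly one element of A_β; and (iii) the union ⋃_{α<ω₁} A_α is dense in P. (Hence T = ⋃_{α<ω₁} A_α, equipped with the reversed order, is a normal tree of height ω₁ that is dense in P.) -/
/-!
Enumerate `P` as `⟨e α : α < ω₁⟩` and build the levels `A α` by transfinite recursion. Given the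
earlier levels, the conditions lying strictly below a member of a fixed `A β` form a dense open set
(density of strict extensions uses that `P` is atomless). Since `α` is countable, distributivity
(`dense_iInter`) makes the set of conditions strictly below a member of every `A β`, `β < α`,
dense. It therefore contains some `d ≤ e α`, and Zorn's lemma extends `{d}` to an antichain maximal
within this dense set, which is then a maximal antichain of `P` (`exists_maxAntichain_subset`).
Taking it as `A α` puts a member of the tree below every `e α`, so the union of the levels is
dense; uniqueness of the member of `A β` above a given `a` holds because two such members are
compatible.
-/

/- Forcing conventions: `q ≤ p` means `q` is stronger than `p`. -/

/-- `D` is dense in `P`: every condition has an extension in `D`. -/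
def FDense {P : Type*} [Preorder P] (D : Set P) : Prop :=
  ∀ p : P, ∃ d ∈ D, d ≤ p

/-- `D` is open in `P`: downward closed. -/
def FOpen {P : Type*} [Preorder P] (D : Set P) : Prop :=
  ∀ p ∈ D, ∀ q : P, q ≤ p → q ∈ D

/-- Two conditions are compatible if they have a common extension. -/
def Compat {P : Type*} [Preorder P] (p q : P) : Prop :=
  ∃ r : P, r ≤ p ∧ r ≤ q

/-- An antichain: a set of pairwise incompatible conditions. -/
def FAntichain {P : Type*} [Preorder P] (A : Set P) : Prop :=
  ∀ p ∈ A, ∀ q ∈ A, p ≠ q → ¬Compat p q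

/-- A maximal antichain: an antichain such that every condition is
compatible with some member. -/
def MaxAntichain {P : Type*} [Preorder P] (A : Set P) : Prop :=
  FAntichain A ∧ ∀ p : P, ∃ a ∈ A, Compat p a

/-- `P` is ℵ₀-distributive: the intersection of countably many dense open
sets is dense. -/
def Distributive (P : Type*) [Preorder P] : Prop :=
  ∀ D : ℕ → Set P, (∀ n, FOpen (D n) ∧ FDense (D n)) → FDense (⋂ n, D n)

/-- `P` is atomless: below every condition there are two incompatible
conditions. -/
def AtomlessOrder (P : Type*) [Preorder P] : Prop :=
  ∀ p : P, ∃ q r : P, q ≤ p ∧ r ≤ p ∧ ¬Compat q r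

/-- The first uncountable ordinal. -/
noncomputable def omega1 : Ordinal := (Cardinal.aleph 1).ord

/-- Distributivity for families indexed by an arbitrary countable (possibly empty) type. -/
lemma dense_iInter {P : Type*} [Preorder P] (hdistr : Distributive P) {ι : Type*} [Countable ι]
    (E : ι → Set P) (hE : ∀ i, FOpen (E i) ∧ FDense (E i)) : FDense (⋂ i, E i) := by
  obtain ⟨f, hf⟩ := exists_injective_nat ι
  -- Indices outside the range of `f` contribute the whole of `P`.
  have key := hdistr (fun n => {q | ∀ i, f i = n → q ∈ E i}) (by
    intro n
    refine ⟨fun p hp q hq i hi => (hE i).1 p (hp i hi) q hq, fun p => ?_⟩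
    by_cases h : ∃ i, f i = n
    · obtain ⟨i, rfl⟩ := h
      obtain ⟨d, hd, hdp⟩ := (hE i).2 p
      refine ⟨d, fun j hj => ?_, hdp⟩
      rwa [hf hj]
    · exact ⟨p, fun i hi => (h ⟨i, hi⟩).elim, le_rfl⟩)
  intro p
  obtain ⟨d, hd, hdp⟩ := key p
  refine ⟨d, ?_, hdp⟩
  simp only [Set.mem_iInter] at hd ⊢
  exact fun i => hd (f i) i rfl

lemma strictBelow_open_dense {P : Type*} [PartialOrder P] (hat : AtomlessOrder P) {A : Set P}
    (hA : MaxAntichain A) : FOpen {q | ∃ a ∈ A, q < a} ∧ FDense {q | ∃ a ∈ A, q < a} := by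
  refine ⟨?_, fun p => ?_⟩
  · rintro p ⟨a, ha, hpa⟩ q hq
    exact ⟨a, ha, hq.trans_lt hpa⟩
  · obtain ⟨a, ha, r, hrp, hra⟩ := hA.2 p
    obtain ⟨s, t, hs, ht, hst⟩ := hat r
    -- `s` and `t` are incompatible, so they cannot both equal `r`; if `s` does, use `t`.
    by_cases h : s = r
    · have hne : t ≠ r := by
        rintro rfl
        exact hst ⟨t, h.ge, le_rfl⟩
      exact ⟨t, ⟨a, ha, (lt_of_le_of_ne ht hne).trans_le hra⟩, ht.trans hrp⟩
    · exact ⟨s, ⟨a, ha, (lt_of_le_of_ne hs h).trans_le hra⟩, hs.trans hrp⟩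

lemma exists_maxAntichain_subset {P : Type*} [PartialOrder P] {D : Set P} (hD : FDense D)
    {d : P} (hd : d ∈ D) : ∃ A, MaxAntichain A ∧ A ⊆ D ∧ d ∈ A := by
  obtain ⟨M, hdM, hM⟩ := zorn_subset_nonempty {A : Set P | FAntichain A ∧ A ⊆ D} (by
      intro c hc hchain _
      refine ⟨⋃₀ c, ⟨?_, Set.sUnion_subset fun s hs => (hc hs).2⟩,
        fun s hs => Set.subset_sUnion_of_mem hs⟩
      rintro p ⟨s, hs, hp⟩ q ⟨t, ht, hq⟩ hpq
      rcases hchain.total hs ht with h | h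
      · exact (hc ht).1 p (h hp) q hq hpq
      · exact (hc hs).1 p hp q (h hq) hpq)
    {d} ⟨by
      rintro p rfl q rfl h
      exact (h rfl).elim, by simpa using hd⟩
  refine ⟨M, ⟨hM.prop.1, fun p => ?_⟩, hM.prop.2, hdM rfl⟩
  by_contra! hcon
  -- An extension of `p` in `D` could be added to `M`.
  obtain ⟨x, hx, hxp⟩ := hD p
  have hxM : ∀ a ∈ M, ¬ Compat x a := fun a ha ⟨r, h1, h2⟩ => hcon a ha ⟨r, h1.trans hxp, h2⟩
  have hins : insert x M ∈ {A : Set P | FAntichain A ∧ A ⊆ D} := by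
    refine ⟨?_, Set.insert_subset hx hM.prop.2⟩
    rintro p (rfl | hp) q (rfl | hq) hpq
    · exact (hpq rfl).elim
    · exact hxM q hq
    · exact fun ⟨r, h1, h2⟩ => hxM p hp ⟨r, h2, h1⟩
    · exact hM.prop.1 p hp q hq hpq
  have hmem : x ∈ M := hM.le_of_ge hins (Set.subset_insert x M) (Set.mem_insert x M)
  exact hxM x hmem ⟨x, le_rfl, le_rfl⟩

/-- The requirements on level `α`, given the levels `A β` for `β < α` and a condition `p` below
which the level must have a member. -/
def GoodLevel {P : Type*} [PartialOrder P] (p : P) (α : Ordinal) (A : ∀ β, β < α → Set P)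
    (S : Set P) : Prop :=
  MaxAntichain S ∧ (∀ q ∈ S, ∀ β (h : β < α), ∃ a ∈ A β h, q < a) ∧ ∃ d ∈ S, d ≤ p

open Classical in
/-- The levels of the tree, by recursion on `α`; the junk value `∅` is taken when no good level
exists. -/
noncomputable def treeLevel {P : Type*} [PartialOrder P] (e : Ordinal → P) (α : Ordinal) : Set P :=
  if h : ∃ S, GoodLevel (e α) α (fun β _ => treeLevel e β) S then h.choose else ∅
termination_by α

lemma countable_Iio_of_lt_omega1 {α : Ordinal} (h : α < omega1) : Countable (Set.Iio α) := by
  rw [← Cardinal.mk_le_aleph0_iff, Cardinal.mk_Iio_ordinal, Cardinal.lift_le_aleph0]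
  have h1 : α.card < Cardinal.aleph 1 := Cardinal.lt_ord.1 h
  rwa [← Cardinal.succ_aleph0, Order.lt_succ_iff] at h1

lemma treeLevel_good {P : Type*} [PartialOrder P] (hat : AtomlessOrder P)
    (hdistr : Distributive P) (e : Ordinal → P) (α : Ordinal) (hα : α < omega1) :
    GoodLevel (e α) α (fun β _ => treeLevel e β) (treeLevel e α) := by
  induction α using WellFoundedLT.induction with
  | ind α ih =>
  have hex : ∃ S, GoodLevel (e α) α (fun β _ => treeLevel e β) S := by
    have := countable_Iio_of_lt_omega1 hα
    have hD := dense_iInter hdistr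
      (fun β : Set.Iio α => {q | ∃ a ∈ treeLevel e β.1, q < a})
      (fun β => strictBelow_open_dense hat (ih β.1 β.2 (lt_trans β.2 hα)).1)
    obtain ⟨d, hd, hdp⟩ := hD (e α)
    obtain ⟨S, hS, hSD, hdS⟩ := exists_maxAntichain_subset hD hd
    exact ⟨S, hS, fun q hq β hβ => Set.mem_iInter.1 (hSD hq) ⟨β, hβ⟩, d, hdS, hdp⟩
  rw [treeLevel, dif_pos hex]
  exact hex.choose_spec

/-- The ordinals may live in a different universe from `P`, hence the cardinal lifts. -/
lemma exists_enumeration.{u, v} {P : Type u} (hcard : Cardinal.mk P = Cardinal.aleph 1) :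
    ∃ e : Ordinal.{v} → P, ∀ p, ∃ α < omega1, e α = p := by
  have hne : Nonempty P := by
    rw [← Cardinal.mk_ne_zero_iff, hcard]
    exact (Cardinal.aleph_pos 1).ne'
  have heq : Cardinal.lift.{v + 1} (Cardinal.mk P) =
      Cardinal.lift.{u} (Cardinal.mk (Set.Iio omega1.{v})) := by
    rw [hcard, Cardinal.mk_Iio_ordinal, omega1, Cardinal.card_ord]
    simp
  obtain ⟨f⟩ := Cardinal.lift_mk_eq'.1 heq
  refine ⟨fun α => Function.invFun (fun p => (f p).1) α, fun p => ⟨(f p).1, (f p).2, ?_⟩⟩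
  exact Function.leftInverse_invFun (Subtype.val_injective.comp f.injective) p

/-- An atomless ℵ₀-distributive partial order of size ℵ₁ carries a family
`⟨A_α : α < ω₁⟩` of maximal antichains, each refining the previous ones
(every element of `A_α` lies strictly below exactly one element of `A_β`
for `β < α`), whose union is dense in `P`; i.e. it has a dense normal tree
of height `ω₁`. -/
theorem small_distributive_has_dense_normal_tree
    {P : Type*} [PartialOrder P]
    (hcard : Cardinal.mk P = Cardinal.aleph 1)
    (hatomless : AtomlessOrder P)
    (hdistr : Distributive P) :
    ∃ A : Ordinal → Set P,
      (∀ α < omega1, MaxAntichain (A α)) ∧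
      (∀ β α : Ordinal, β < α → α < omega1 →
        ∀ a ∈ A α, ∃! b, b ∈ A β ∧ a < b) ∧
      FDense {p : P | ∃ α < omega1, p ∈ A α} := by
  obtain ⟨e, he⟩ := exists_enumeration hcard
  have hgood := treeLevel_good hatomless hdistr e
  refine ⟨treeLevel e, fun α hα => (hgood α hα).1, fun β α hβα hα a ha => ?_, fun p => ?_⟩
  · obtain ⟨b, hb, hab⟩ := (hgood α hα).2.1 a ha β hβα
    refine ⟨b, ⟨hb, hab⟩, fun c ⟨hc, hac⟩ => ?_⟩
    by_contra hne
    exact (hgood β (hβα.trans hα)).1.1 c hc b hb hne ⟨a, hac.le, hab.le⟩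
  · obtain ⟨α, hα, rfl⟩ := he p
    obtain ⟨d, hd, hdp⟩ := (hgood α hα).2.2
    exact ⟨d, ⟨α, hα, hd⟩, hdp⟩
end

section
/- Let T be a tree of height ω₁. Let Q₁ be the set of pairs ⟨s, A⟩ where s is a countable subset of T and A is a countable set of cofinal branches of T, ordered by: ⟨s₀, A₀⟩ ≥ ⟨s₁, A₁⟩ if and only if s₀ ⊆ s₁, A₀ ⊆ A₁, and b ∩ s₁ ⊆ s₀ for every b ∈ A₀. Then this relation is a partial order on Q₁, and Q₁ is σ-closed: every decreasing ω-sequence ⟨q_n : n < ω⟩ of elements of Q₁ has a lower bound in Q₁. -/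
/-- `(T, ≤)` is a (set-theoretic) tree: the set of strict predecessors of
every node is well-ordered by the order of `T`. -/
def IsSetTree (T : Type*) [PartialOrder T] : Prop :=
  ∀ t : T, IsWellOrder {s : T // s < t} (fun a b => a.1 < b.1)

/-- The level of a node of a tree: the order type of its set of strict
predecessors. -/
noncomputable def level {T : Type*} [PartialOrder T] (h : IsSetTree T) (t : T) :
    Ordinal :=
  @Ordinal.type {s : T // s < t} (fun a b => a.1 < b.1) (h t)

/-- The tree `T` has height `ω₁`: every node has countable level and there
are nodes of every level `α < ω₁`. -/
def HasHeightOmega1 {T : Type*} [PartialOrder T] (h : IsSetTree T) : Prop :=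
  (∀ t : T, level h t < omega1) ∧ ∀ α < omega1, ∃ t : T, level h t = α

/-- A cofinal branch of `T`: a maximal chain containing nodes of every
level `α < ω₁`. -/
def CofinalBranch {T : Type*} [PartialOrder T] (h : IsSetTree T) (b : Set T) :
    Prop :=
  IsMaxChain (· ≤ ·) b ∧ ∀ α < omega1, ∃ t ∈ b, level h t = α

/-- The underlying set of the forcing `Q₁`: pairs `⟨s, A⟩` where `s` is a
countable subset of `T` and `A` is a countable set of cofinal branches of
`T`. -/
def Q1 {T : Type*} [PartialOrder T] (h : IsSetTree T) :
    Set (Set T × Set (Set T)) :=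
  {q | q.1.Countable ∧ q.2.Countable ∧ ∀ b ∈ q.2, CofinalBranch h b}

/-- The order on `Q₁`: `⟨s₁, A₁⟩` is stronger than (below) `⟨s₀, A₀⟩` iff
`s₀ ⊆ s₁`, `A₀ ⊆ A₁` and `b ∩ s₁ ⊆ s₀` for every `b ∈ A₀`. -/
def Q1le {T : Type*} (q₁ q₀ : Set T × Set (Set T)) : Prop :=
  q₀.1 ⊆ q₁.1 ∧ q₀.2 ⊆ q₁.2 ∧ ∀ b ∈ q₀.2, b ∩ q₁.1 ⊆ q₀.1

/-- The relation `Q1le` is a partial order on `Q₁`, and `Q₁` is σ-closed: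
every decreasing ω-sequence of conditions has a lower bound. -/
theorem Q1_partialOrder_and_sigma_closed
    {T : Type*} [PartialOrder T]
    (h : IsSetTree T) (hht : HasHeightOmega1 h) :
    IsPartialOrder (Q1 h) (fun q₁ q₀ => Q1le q₁.1 q₀.1) ∧
    ∀ q : ℕ → Q1 h, (∀ m n : ℕ, m ≤ n → Q1le (q n).1 (q m).1) →
      ∃ r : Q1 h, ∀ n : ℕ, Q1le r.1 (q n).1 := by
  refine ⟨{ refl := ?_, trans := ?_, antisymm := ?_ }, ?_⟩
  · exact fun q => ⟨subset_rfl, subset_rfl, fun _ _ => Set.inter_subset_right⟩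
  · rintro a b c ⟨hs, hA, hb⟩ ⟨hs', hA', hb'⟩
    exact ⟨hs'.trans hs, hA'.trans hA,
      fun d hd x hx => hb' d hd ⟨hx.1, hb d (hA' hd) hx⟩⟩
  · rintro a b ⟨hs, hA, -⟩ ⟨hs', hA', -⟩
    exact Subtype.ext (Prod.ext (hs'.antisymm hs) (hA'.antisymm hA))
  · intro q hq
    -- The coordinatewise union of the sequence is a lower bound.
    refine ⟨⟨(⋃ n, (q n).1.1, ⋃ n, (q n).1.2), Set.countable_iUnion fun n => (q n).2.1,
      Set.countable_iUnion fun n => (q n).2.2.1, ?_⟩, fun n => ⟨?_, ?_, ?_⟩⟩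
    · intro b hb
      obtain ⟨n, hn⟩ := Set.mem_iUnion.1 hb
      exact (q n).2.2.2 b hn
    · exact Set.subset_iUnion (fun n => (q n).1.1) n
    · exact Set.subset_iUnion (fun n => (q n).1.2) n
    · rintro b hb x ⟨hxb, hx⟩
      obtain ⟨m, hm⟩ := Set.mem_iUnion.1 hx
      -- A node of `b` in an earlier `s_m` lies in `s_n` by monotonicity; one in a later
      -- `s_m` lies in `s_n` because `b ∈ A_n` forbids adding new nodes of `b`.
      rcases le_total m n with hmn | hnm
      · exact (hq m n hmn).1 hm
      · exact (hq n m hnm).2.2 b hb ⟨hxb, hm⟩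
end

section
/- Let C and E be countable sets and P an arbitrary set. Let Q be a partial order whose underlying set is a set of pairs ⟨f, g⟩ where f ∈ C and g is a function from a finite subset of P into E, and suppose that whenever ⟨f, g₀⟩ and ⟨f, g₁⟩ both belong to Q and g₀ and g₁ agree on dom(g₀) ∩ dom(g₁), the conditions ⟨f, g₀⟩ and ⟨f, g₁⟩ are compatible in Q. Then Q has the Knaster property: every uncountable subset of Q contains an uncountable subset whose elements are pairwise compatible. In particular, Q has no uncountable antichain (Q is c.c.c.). -/
/-!
The heart of the proof is a form of the Δ-system argument that never builds a Δ-system: an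
uncountable family `S` of partial functions `P → E`, with domains of size at most `n` outside a set
`D` on which all members coincide, has an uncountable pairwise agreeing subfamily
(`exists_uncountable_agree`). This goes by induction on `n`. If uncountably many members are defined
at a common `p ∉ D`, uncountably many of them take the same value at `p`, since `E` is countable, and
`p` moves into `D`. Otherwise each `p ∉ D` lies in only countably many domains. A maximal pairwise
agreeing subfamily `M` is then uncountable: every other member of `S` disagrees with a member of `M`
at some `p ∉ D` in the domains of both, so if `M` were countable, so would be `S`.

The Knaster property follows by fixing, for uncountably many conditions, the first coordinate
and a bound on the size of the domain of the second; the countable chain condition is immediate from it.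
-/

/-- Two partial functions agree if they coincide on the intersection of their domains. -/
def Agree {P E : Type*} (g₀ g₁ : P → Option E) : Prop :=
  ∀ p : P, g₀ p ≠ none → g₁ p ≠ none → g₀ p = g₁ p

theorem Agree.symm {P E : Type*} {g₀ g₁ : P → Option E} (h : Agree g₀ g₁) : Agree g₁ g₀ :=
  fun p h₁ h₀ => (h p h₀ h₁).symm

theorem Agree.refl {P E : Type*} (g : P → Option E) : Agree g g :=
  fun _ _ _ => rfl

theorem exists_maximal_agree {P E : Type*} (S : Set (P → Option E)) :
    ∃ M ⊆ S, (∀ g₀ ∈ M, ∀ g₁ ∈ M, Agree g₀ g₁) ∧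
      ∀ g ∈ S, g ∉ M → ∃ g' ∈ M, ¬Agree g g' := by
  obtain ⟨M, hM⟩ := zorn_subset {T : Set (P → Option E) | T ⊆ S ∧ T.Pairwise Agree} (by
    intro c hc hchain
    refine ⟨⋃₀ c, ⟨Set.sUnion_subset fun T hT => (hc hT).1, ?_⟩,
      fun T hT => Set.subset_sUnion_of_mem hT⟩
    exact (Set.pairwise_sUnion hchain.directedOn).2 fun T hT => (hc hT).2)
  refine ⟨M, hM.prop.1, fun g₀ h₀ g₁ h₁ => ?_, fun g hg hgM => ?_⟩
  · by_cases h : g₀ = g₁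
    · exact h ▸ Agree.refl g₀
    · exact hM.prop.2 h₀ h₁ h
  · by_contra! hcon
    refine hgM (hM.le_of_ge (y := insert g M) ⟨?_, ?_⟩ (Set.subset_insert g M)
      (Set.mem_insert g M))
    · exact Set.insert_subset hg hM.prop.1
    · exact hM.prop.2.insert fun g' hg' _ => ⟨hcon g' hg', (hcon g' hg').symm⟩

/-- The case where every point outside `D` lies in only countably many domains: then a maximal
pairwise agreeing subfamily is uncountable. -/
theorem exists_uncountable_agree_of_sparse {P E : Type*} (D : Set P) (S : Set (P → Option E))
    (hS : ¬S.Countable) (hD : ∀ g₀ ∈ S, ∀ g₁ ∈ S, ∀ p ∈ D, g₀ p = g₁ p)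
    (hfin : ∀ g ∈ S, ({p | g p ≠ none} \ D).Finite)
    (hsparse : ∀ p ∉ D, {g ∈ S | g p ≠ none}.Countable) :
    ∃ S' ⊆ S, ¬S'.Countable ∧ ∀ g₀ ∈ S', ∀ g₁ ∈ S', Agree g₀ g₁ := by
  obtain ⟨M, hMS, hM, hmax⟩ := exists_maximal_agree S
  refine ⟨M, hMS, fun hMc => hS ?_, hM⟩
  have hcount : (M ∪ ⋃ g' ∈ M, ⋃ p ∈ {p | g' p ≠ none} \ D, {g ∈ S | g p ≠ none}).Countable :=
    hMc.union <| hMc.biUnion fun g' hg' =>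
      (hfin g' (hMS hg')).countable.biUnion fun p hp => hsparse p hp.2
  refine hcount.mono fun g hg => ?_
  by_cases hgM : g ∈ M
  · exact Or.inl hgM
  · obtain ⟨g', hg', hdis⟩ := hmax g hg hgM
    simp only [Agree, not_forall] at hdis
    obtain ⟨p, hp, hp', hne⟩ := hdis
    right
    simp only [Set.mem_iUnion]
    exact ⟨g', hg', p, ⟨hp', fun hpD => hne (hD g hg g' (hMS hg') p hpD)⟩, hg, hp⟩

/-- The induction replacing the Δ-system lemma; `D` collects the points where the members of the
family have already been made to coincide. -/
theorem exists_uncountable_agree {P E : Type*} [Countable E] (n : ℕ) :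
    ∀ (D : Set P) (S : Set (P → Option E)), ¬S.Countable →
      (∀ g₀ ∈ S, ∀ g₁ ∈ S, ∀ p ∈ D, g₀ p = g₁ p) →
      (∀ g ∈ S, ({p | g p ≠ none} \ D).encard ≤ n) →
      ∃ S' ⊆ S, ¬S'.Countable ∧ ∀ g₀ ∈ S', ∀ g₁ ∈ S', Agree g₀ g₁ := by
  induction n with
  | zero =>
    intro D S hS hD hn
    have hempty : ∀ g ∈ S, {p | g p ≠ none} \ D = ∅ := fun g hg => by
      simpa using hn g hg
    refine exists_uncountable_agree_of_sparse D S hS hD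
      (fun g hg => by simp [hempty g hg]) fun p hp => ?_
    convert Set.countable_empty
    refine Set.eq_empty_of_forall_notMem fun g hg => ?_
    exact (hempty g hg.1).subset ⟨hg.2, hp⟩
  | succ n ih =>
    intro D S hS hD hn
    by_cases hsparse : ∀ p ∉ D, {g ∈ S | g p ≠ none}.Countable
    · exact exists_uncountable_agree_of_sparse D S hS hD
        (fun g hg => Set.finite_of_encard_le_coe (hn g hg)) hsparse
    · push Not at hsparse
      obtain ⟨p, hp, hunc⟩ := hsparse
      obtain ⟨e, he⟩ : ∃ e : E, ¬{g ∈ S | g p = some e}.Countable := by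
        by_contra! hcon
        refine hunc ((Set.countable_iUnion hcon).mono fun g hg => ?_)
        obtain ⟨e, he⟩ := Option.ne_none_iff_exists'.1 hg.2
        exact Set.mem_iUnion.2 ⟨e, hg.1, he⟩
      obtain ⟨S', hS', h⟩ := ih (insert p D) {g ∈ S | g p = some e} he
        (by
          rintro g₀ ⟨h₀, e₀⟩ g₁ ⟨h₁, e₁⟩ x (rfl | hx)
          · rw [e₀, e₁]
          · exact hD g₀ h₀ g₁ h₁ x hx)
        (by
          rintro g ⟨hg, hge⟩
          have hmem : p ∈ {p | g p ≠ none} \ D := ⟨by simp [hge], hp⟩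
          have hdiff : {p | g p ≠ none} \ insert p D = ({p | g p ≠ none} \ D) \ {p} := by
            ext x
            simp only [Set.mem_sdiff, Set.mem_insert_iff, Set.mem_singleton_iff]
            tauto
          have hcard := hn g hg
          rw [← Set.encard_sdiff_singleton_add_one hmem] at hcard
          rw [hdiff]
          push_cast at hcard
          exact (ENat.add_le_add_iff_right ENat.one_ne_top).1 hcard)
      exact ⟨S', hS'.trans (Set.sep_subset _ _), h⟩

/- A partial function from `P` to `E` with finite domain is modelled as a
function `g : P → Option E` whose support `{p | g p ≠ none}` is finite;
its domain is its support. Conditions of `Q` are pairs `⟨f, g⟩` with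
`f ∈ C` and `g` such a finite partial function. Compatibility of `q₀, q₁`
in `Q` means the existence of `r ∈ Q` with `r ≤ q₀` and `r ≤ q₁`. -/

/-- If `C` and `E` are countable, `Q` is a partial order whose conditions
are pairs `⟨f, g⟩` of an element `f ∈ C` and a finite partial function `g`
from `P` to `E`, and any two conditions with the same first coordinate
whose second coordinates agree on the intersection of their domains are
compatible, then `Q` has the Knaster property: every uncountable subset of
`Q` has an uncountable subset of pairwise compatible conditions. In
particular `Q` has no uncountable antichain (`Q` is c.c.c.). -/
theorem knaster_of_finite_partial_functions
    {C E P : Type*} [Countable C] [Countable E]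
    (Q : Set (C × (P → Option E)))
    (hfin : ∀ q ∈ Q, {p : P | q.2 p ≠ none}.Finite)
    (le : C × (P → Option E) → C × (P → Option E) → Prop)
    (hrefl : ∀ q ∈ Q, le q q)
    (htrans : ∀ q₀ ∈ Q, ∀ q₁ ∈ Q, ∀ q₂ ∈ Q, le q₀ q₁ → le q₁ q₂ → le q₀ q₂)
    (hantisymm : ∀ q₀ ∈ Q, ∀ q₁ ∈ Q, le q₀ q₁ → le q₁ q₀ → q₀ = q₁)
    (hcompat : ∀ (f : C) (g₀ g₁ : P → Option E),
      (f, g₀) ∈ Q → (f, g₁) ∈ Q →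
      (∀ p : P, g₀ p ≠ none → g₁ p ≠ none → g₀ p = g₁ p) →
      ∃ r ∈ Q, le r (f, g₀) ∧ le r (f, g₁)) :
    (∀ S ⊆ Q, ¬S.Countable →
      ∃ S' ⊆ S, ¬S'.Countable ∧
        ∀ q₀ ∈ S', ∀ q₁ ∈ S', ∃ r ∈ Q, le r q₀ ∧ le r q₁) ∧
    (∀ A ⊆ Q, (∀ q₀ ∈ A, ∀ q₁ ∈ A, q₀ ≠ q₁ → ¬∃ r ∈ Q, le r q₀ ∧ le r q₁) →
      A.Countable) := by
  have knaster : ∀ S ⊆ Q, ¬S.Countable →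
      ∃ S' ⊆ S, ¬S'.Countable ∧
        ∀ q₀ ∈ S', ∀ q₁ ∈ S', ∃ r ∈ Q, le r q₀ ∧ le r q₁ := by
    intro S hSQ hS
    obtain ⟨c, n, hT⟩ : ∃ (c : C) (n : ℕ),
        ¬{g | (c, g) ∈ S ∧ {p | g p ≠ none}.encard ≤ n}.Countable := by
      by_contra! hcon
      refine hS ((Set.countable_iUnion fun c => Set.countable_iUnion fun n =>
        (hcon c n).image (Prod.mk c)).mono ?_)
      rintro ⟨c, g⟩ hq
      simp only [Set.mem_iUnion]
      exact ⟨c, _, g, ⟨hq, (hfin _ (hSQ hq)).encard_eq_coe.le⟩, rfl⟩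
    obtain ⟨T, hTsub, hTunc, hagree⟩ := exists_uncountable_agree n ∅ _ hT
      (fun _ _ _ _ p hp => hp.elim) (fun g hg => by simpa using hg.2)
    refine ⟨Prod.mk c '' T, ?_, ?_, ?_⟩
    · rintro _ ⟨g, hg, rfl⟩
      exact (hTsub hg).1
    · exact fun h => hTunc (Set.countable_of_injective_of_countable_image
        (Prod.mk_right_injective c).injOn h)
    · rintro _ ⟨g₀, h₀, rfl⟩ _ ⟨g₁, h₁, rfl⟩
      exact hcompat c g₀ g₁ (hSQ (hTsub h₀).1) (hSQ (hTsub h₁).1) (hagree g₀ h₀ g₁ h₁)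
  refine ⟨knaster, fun A hAQ hanti => ?_⟩
  by_contra hA
  obtain ⟨S', hS'A, hS', hcomp⟩ := knaster A hAQ hA
  -- A pairwise compatible subset of an antichain has at most one element.
  refine hS' (Set.Subsingleton.countable fun q₀ h₀ q₁ h₁ => ?_)
  by_contra hne
  exact hanti q₀ (hS'A h₀) q₁ (hS'A h₁) hne (hcomp q₀ h₀ q₁ h₁)
end

section
/- Let P be an atomless ℵ₀-distributive partial order, let ⟨A_α : α < ω₁⟩ be a family of maximal antichains of P such that for all β < α < ω₁ every element of A_α lies strictly below exactly one element of A_β, and suppose T = ⋃_{α<ω₁} A_α is dense in P. Call a set b ⊆ T a cofinal branch of T if it is a maximal chain of (T, ≤) meeting every A_α. Then for every t ∈ T and every countable set 𝒜 of cofinal branches of T, there exists s ∈ T with s ≤ t and s ∉ ⋃𝒜 (countably many cofinal branches cannot cover the part of T below any node). -/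
/-- The underlying set `T = ⋃_{α<ω₁} A_α` of the tree of antichains. -/
def treeSet {P : Type*} (A : Ordinal → Set P) : Set P :=
  {p | ∃ α < omega1, p ∈ A α}

/-- A cofinal branch of the tree `T = ⋃_{α<ω₁} A_α`: a maximal chain of
`(T, ≤)` meeting every `A_α`. -/
def CofBranch {P : Type*} [Preorder P] (A : Ordinal → Set P) (b : Set P) :
    Prop :=
  b ⊆ treeSet A ∧ IsChain (· ≤ ·) b ∧
    (∀ c : Set P, c ⊆ treeSet A → IsChain (· ≤ ·) c → b ⊆ c → b = c) ∧
    ∀ α < omega1, (b ∩ A α).Nonempty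

theorem fOpen_no_extension_mem {P : Type*} [Preorder P] (b : Set P) :
    FOpen {p : P | ∀ q ≤ p, q ∉ b} :=
  fun _ hp _ hqp r hr => hp r (hr.trans hqp)

theorem fDense_no_extension_mem {P : Type*} [Preorder P] (hatomless : AtomlessOrder P)
    {b : Set P} (hb : IsChain (· ≤ ·) b) : FDense {p : P | ∀ q ≤ p, q ∉ b} := by
  intro p
  obtain ⟨q, r, hq, hr, hqr⟩ := hatomless p
  by_cases h : ∀ x ≤ q, x ∉ b
  · exact ⟨q, h, hq⟩
  · push Not at h
    obtain ⟨x, hxq, hxb⟩ := h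
    refine ⟨r, fun y hyr hyb => hqr ?_, hr⟩
    rcases hb.total hxb hyb with hxy | hyx
    · exact ⟨x, hxq, hxy.trans hyr⟩
    · exact ⟨y, hyx.trans hxq, hyr⟩

/-- Let `P` be an atomless ℵ₀-distributive partial order and
`⟨A_α : α < ω₁⟩` a family of maximal antichains such that for `β < α < ω₁`
every element of `A_α` lies strictly below exactly one element of `A_β`,
and suppose `T = ⋃_{α<ω₁} A_α` is dense in `P`. Then countably many
cofinal branches of `T` cannot cover the part of `T` below any node: for
every `t ∈ T` and every countable set `𝒜` of cofinal branches there is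
`s ∈ T` with `s ≤ t` avoiding every branch in `𝒜`. -/
theorem countable_branches_do_not_cover_below
    {P : Type*} [PartialOrder P]
    (hatomless : AtomlessOrder P)
    (hdistr : Distributive P)
    (A : Ordinal → Set P)
    (hmax : ∀ α < omega1, MaxAntichain (A α))
    (href : ∀ β α : Ordinal, β < α → α < omega1 →
      ∀ a ∈ A α, ∃! b, b ∈ A β ∧ a < b)
    (hdense : FDense (treeSet A)) :
    ∀ t ∈ treeSet A, ∀ 𝒜 : Set (Set P), 𝒜.Countable →
      (∀ b ∈ 𝒜, CofBranch A b) →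
      ∃ s ∈ treeSet A, s ≤ t ∧ ∀ b ∈ 𝒜, s ∉ b := by
  intro t ht 𝒜 h𝒜 hbr
  rcases 𝒜.eq_empty_or_nonempty with rfl | hne
  · exact ⟨t, ht, le_rfl, by simp⟩
  obtain ⟨f, rfl⟩ := h𝒜.exists_eq_range hne
  obtain ⟨p, hp, hpt⟩ := hdistr (fun n => {p : P | ∀ q ≤ p, q ∉ f n})
    (fun n => ⟨fOpen_no_extension_mem _,
      fDense_no_extension_mem hatomless (hbr _ ⟨n, rfl⟩).2.1⟩) t
  obtain ⟨s, hs, hsp⟩ := hdense p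
  refine ⟨s, hs, hsp.trans hpt, ?_⟩
  rintro _ ⟨n, rfl⟩
  exact Set.mem_iInter.1 hp n s hsp
end
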